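/- Let the compact set A and lower semicontinuous kernel K satisfy assumptions (A1)-(A4). For each N ≥ 2 choose a configuration ω_N ∈ A^N and let ν_N be the probability measure assigning mass 1/N to each point of ω_N (counting multiplicities). Then the sequence {ω_N} is asymptotically optimal for the polarization problem, meaning lim_{N→∞} P(ω_N)/𝒫(A,N) = 1, if and only if the measures ν_N converge weakly to μ_eq as N → ∞. -/

import Mathlib

open MeasureTheory Filter Topology BoundedContinuousFunction NNReal ENNReal

noncomputable section

/-- The potential of a measure `μ` with respect to the kernel `K x y = f (nndist x y)`. -/
def potential {t : ℕ} (f : ℝ≥0 → ℝ≥0∞) (μ : Measure (EuclideanSpace ℝ (Fin t)))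
    (x : EuclideanSpace ℝ (Fin t)) : ℝ≥0∞ :=
  ∫⁻ y, f (nndist x y) ∂μ

/-- The energy `I[μ] = ∫∫ K(x,y) dμ(x) dμ(y)`. -/
def energy {t : ℕ} (f : ℝ≥0 → ℝ≥0∞) (μ : Measure (EuclideanSpace ℝ (Fin t))) : ℝ≥0∞ :=
  ∫⁻ x, potential f μ x ∂μ

/-- The normalized discrete potential `(1/N) ∑_{y ∈ ω} K(x,y)` of a configuration. -/
def discretePotential {t : ℕ} (f : ℝ≥0 → ℝ≥0∞) {N : ℕ}
    (ω : Fin N → EuclideanSpace ℝ (Fin t)) (x : EuclideanSpace ℝ (Fin t)) : ℝ≥0∞ :=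
  (N : ℝ≥0∞)⁻¹ * ∑ i, f (nndist x (ω i))

/-- The polarization `P(ω) = min_{x ∈ A} (1/N) ∑_{y ∈ ω} K(x,y)` of a configuration. -/
def polarization {t : ℕ} (f : ℝ≥0 → ℝ≥0∞) (A : Set (EuclideanSpace ℝ (Fin t))) {N : ℕ}
    (ω : Fin N → EuclideanSpace ℝ (Fin t)) : ℝ≥0∞ :=
  ⨅ x ∈ A, discretePotential f ω x

/-- The optimal `N`-point polarization `𝒫(A,N)`. -/
def maxPolarization {t : ℕ} (f : ℝ≥0 → ℝ≥0∞) (A : Set (EuclideanSpace ℝ (Fin t)))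
    (N : ℕ) : ℝ≥0∞ :=
  ⨆ (ω : Fin N → EuclideanSpace ℝ (Fin t)) (_ : ∀ i, ω i ∈ A), polarization f A ω

/-- The normalized counting measure of a configuration. -/
def countingMeasure {t : ℕ} {N : ℕ} (ω : Fin N → EuclideanSpace ℝ (Fin t)) :
    Measure (EuclideanSpace ℝ (Fin t)) :=
  (N : ℝ≥0∞)⁻¹ • ∑ i, Measure.dirac (ω i)

/-- Weak convergence of a sequence of measures: integrals of every bounded continuous
function converge. -/
def WeaklyTendsto {t : ℕ} (ν : ℕ → Measure (EuclideanSpace ℝ (Fin t)))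
    (μ : Measure (EuclideanSpace ℝ (Fin t))) : Prop :=
  ∀ g : EuclideanSpace ℝ (Fin t) →ᵇ ℝ,
    Tendsto (fun N => ∫ x, g x ∂(ν N)) atTop (𝓝 (∫ x, g x ∂μ))

/-!
Write `U^ν` for the potential of a probability measure `ν` on `A` and `P(ν) = inf_A U^ν`. Since
`∫ U^ν dμ = ∫ U^μ dν = W` for the equilibrium measure `μ`, always `P(ν) ≤ W = P(μ)`. On the other
hand `U^ν(x)` is jointly lower semicontinuous in `(ν, x)`, so `P` is lower semicontinuous and
`ν_i → μ` forces `P(ν_i) → W`. Conversely, suppose that `P(ν_i) → W` and that `ν` is a limit point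
of the `ν_i`. If `U^ν > W` at some point of `A`, then lower semicontinuity would keep `U^{ν_i}`
above some `c > W` on a set of positive `μ`-measure, which is incompatible with `∫ U^{ν_i} dμ = W`
and `P(ν_i) → W`. So `U^ν ≤ W` on `A`, the energy of `ν` is at most `W`, and `ν = μ`. Finally, the
best `N`-point polarization tends to `W`, since the empirical measures of an independent sample
of `μ` approach `μ`.
-/

section LowerSemicontinuous

lemma lowerSemicontinuous_biInf_of_isCompact {X Y β : Type*} [TopologicalSpace X]
    [TopologicalSpace Y] [CompleteLinearOrder β] [DenselyOrdered β] {s : Set X} (hs : IsCompact s)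
    {g : Y × X → β} (hg : LowerSemicontinuous g) :
    LowerSemicontinuous fun y => ⨅ x ∈ s, g (y, x) := by
  intro y c hc
  obtain ⟨d, hcd, hd⟩ := exists_between hc
  have hlt : ∀ᶠ y' in 𝓝 y, ∀ x ∈ s, d < g (y', x) :=
    hs.eventually_forall_of_forall_eventually fun x hx =>
      hg (y, x) d (hd.trans_le (iInf₂_le x hx))
  exact hlt.mono fun y' hy' => hcd.trans_le (le_iInf₂ fun x hx => (hy' x hx).le)

variable {X : Type*} [TopologicalSpace X] [TopologicalSpace.PseudoMetrizableSpace X]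
  [TopologicalSpace.SeparableSpace X] [MeasurableSpace X] [BorelSpace X]

lemma lowerSemicontinuous_lintegral_ofReal {g : X → ℝ} (hg_nonneg : 0 ≤ g)
    (hg : LowerSemicontinuous g) :
    LowerSemicontinuous fun ν : ProbabilityMeasure X => ∫⁻ x, ENNReal.ofReal (g x) ∂ν := by
  rw [lowerSemicontinuous_iff_le_liminf]
  intro ν
  -- By the layer cake formula it suffices to treat indicators of superlevel sets; these are open.
  simp_rw [lintegral_eq_lintegral_meas_lt _ (Eventually.of_forall hg_nonneg)
    hg.measurable.aemeasurable]
  calc ∫⁻ s in Set.Ioi 0, (ν : Measure X) {x | s < g x}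
      ≤ ∫⁻ s in Set.Ioi 0, liminf (fun ν' : ProbabilityMeasure X =>
          (ν' : Measure X) {x | s < g x}) (𝓝 ν) :=
        lintegral_mono fun s => ProbabilityMeasure.le_liminf_measure_open_of_tendsto tendsto_id
          (hg.isOpen_preimage s)
    _ ≤ liminf (fun ν' : ProbabilityMeasure X =>
          ∫⁻ s in Set.Ioi 0, (ν' : Measure X) {x | s < g x}) (𝓝 ν) :=
        lintegral_liminf_le fun _ => Antitone.measurable fun _ _ hsr =>
          measure_mono fun _ hx => lt_of_le_of_lt hsr hx

theorem lowerSemicontinuous_lintegral {g : X → ℝ≥0∞} (hg : LowerSemicontinuous g) :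
    LowerSemicontinuous fun ν : ProbabilityMeasure X => ∫⁻ x, g x ∂ν := by
  have hg_eq : ∀ x, g x = ⨆ n : ℕ, min (n : ℝ≥0∞) (g x) := fun x => by
    rw [← iSup_inf_eq, ENNReal.iSup_natCast, top_inf_eq]
  have hofReal : ∀ (n : ℕ) x,
      ENNReal.ofReal (truncateToReal n (g x)) = min (n : ℝ≥0∞) (g x) := fun n x =>
    ENNReal.ofReal_toReal (ne_top_of_le_ne_top (ENNReal.natCast_ne_top n) (min_le_left _ _))
  have hintegral : ∀ ν : ProbabilityMeasure X, ∫⁻ x, g x ∂ν =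
      ⨆ n : ℕ, ∫⁻ x, ENNReal.ofReal (truncateToReal n (g x)) ∂ν := fun ν => by
    simp_rw [hofReal]
    rw [lintegral_congr hg_eq, lintegral_iSup fun n => measurable_const.min hg.measurable]
    exact fun m n hmn x => min_le_min (Nat.cast_le.2 hmn) le_rfl
  simp_rw [hintegral]
  exact lowerSemicontinuous_iSup fun n =>
    lowerSemicontinuous_lintegral_ofReal (fun _ => truncateToReal_nonneg)
      ((continuous_truncateToReal (natCast_ne_top n)).comp_lowerSemicontinuous hg
        (monotone_truncateToReal (natCast_ne_top n)))

end LowerSemicontinuous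

lemma isCompact_setOf_measure_compl_eq_zero {X : Type*} [TopologicalSpace X] [T2Space X]
    [MeasurableSpace X] [BorelSpace X] {A : Set X} (hA : IsCompact A) :
    IsCompact {ν : ProbabilityMeasure X | (ν : Measure X) Aᶜ = 0} := by
  simpa using isCompact_setOfPred_probabilityMeasure_mass_eq_compl_isCompact_le
    (u := fun _ => 0) tendsto_const_nhds (fun _ => hA) (Or.inr monotone_const)

section KernelPotential

variable {X : Type*} [MeasurableSpace X]

/-- The potential `x ↦ ∫ K(x, y) dν(y)` of a measure for an arbitrary kernel; `potential f` is the
case of the kernel `f (nndist x y)`. -/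
def kernelPotential (K : X → X → ℝ≥0∞) (ν : Measure X) (x : X) : ℝ≥0∞ :=
  ∫⁻ y, K x y ∂ν

/-- The energy `∫∫ K dν dν` of a measure for an arbitrary kernel. -/
def kernelEnergy (K : X → X → ℝ≥0∞) (ν : Measure X) : ℝ≥0∞ :=
  ∫⁻ x, kernelPotential K ν x ∂ν

/-- The polarization `inf_A U^ν` of a measure. The polarization of a configuration is the
polarization of its normalized counting measure. -/
def kernelPolarization (K : X → X → ℝ≥0∞) (A : Set X) (ν : Measure X) : ℝ≥0∞ :=
  ⨅ x ∈ A, kernelPotential K ν x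

variable {K : X → X → ℝ≥0∞} {A : Set X} {W : ℝ≥0∞}

lemma lintegral_kernelPotential_comm (hK : Measurable (Function.uncurry K))
    (hsymm : ∀ x y, K x y = K y x) (μ ν : Measure X) [SFinite μ] [SFinite ν] :
    ∫⁻ x, kernelPotential K μ x ∂ν = ∫⁻ x, kernelPotential K ν x ∂μ := by
  unfold kernelPotential
  rw [lintegral_lintegral_swap hK.aemeasurable]
  simp_rw [hsymm]

lemma lintegral_kernelPotential_eq (hK : Measurable (Function.uncurry K))
    (hsymm : ∀ x y, K x y = K y x) {μ ν : Measure X} [SFinite μ] [IsProbabilityMeasure ν]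
    (hμW : ∀ x ∈ A, kernelPotential K μ x = W) (hν : ν Aᶜ = 0) :
    ∫⁻ x, kernelPotential K ν x ∂μ = W := by
  rw [lintegral_kernelPotential_comm hK hsymm]
  exact lintegral_eq_const (mem_of_superset (mem_ae_iff.2 hν) hμW)

lemma mul_add_kernelPolarization_mul_le_lintegral {μ ν : Measure X} (hμ : μ Aᶜ = 0) {U : Set X}
    (hU : MeasurableSet U) {c : ℝ≥0∞} (hc : ∀ x ∈ U, c ≤ kernelPotential K ν x) :
    c * μ U + kernelPolarization K A ν * μ Uᶜ ≤ ∫⁻ x, kernelPotential K ν x ∂μ := by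
  have hle : ∀ᵐ x ∂μ, kernelPolarization K A ν ≤ kernelPotential K ν x :=
    Eventually.mono (show ∀ᵐ x ∂μ, x ∈ A from mem_ae_iff.2 hμ) fun x hx => iInf₂_le x hx
  rw [← lintegral_add_compl _ hU, ← setLIntegral_const, ← setLIntegral_const]
  gcongr ?_ + ?_
  · exact setLIntegral_mono' hU hc
  · exact lintegral_mono_ae (ae_restrict_of_ae hle)

lemma kernelPolarization_le_lintegral {μ ν : Measure X} [IsProbabilityMeasure μ] (hμ : μ Aᶜ = 0) :
    kernelPolarization K A ν ≤ ∫⁻ x, kernelPotential K ν x ∂μ := by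
  simpa using mul_add_kernelPolarization_mul_le_lintegral (K := K) (ν := ν) (c := 0) hμ .empty
    (by simp)

lemma kernelPolarization_le_of_kernelPotential_eq (hK : Measurable (Function.uncurry K))
    (hsymm : ∀ x y, K x y = K y x) {μ ν : Measure X} [IsProbabilityMeasure μ]
    [IsProbabilityMeasure ν] (hμ : μ Aᶜ = 0) (hμW : ∀ x ∈ A, kernelPotential K μ x = W)
    (hν : ν Aᶜ = 0) : kernelPolarization K A ν ≤ W :=
  (kernelPolarization_le_lintegral hμ).trans_eq (lintegral_kernelPotential_eq hK hsymm hμW hν)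

end KernelPotential

section Equilibrium

variable {X : Type*} [TopologicalSpace X] [SecondCountableTopology X]
  [TopologicalSpace.PseudoMetrizableSpace X] [MeasurableSpace X] [BorelSpace X]
  {K : X → X → ℝ≥0∞} {A : Set X} {W : ℝ≥0∞} {μ : ProbabilityMeasure X}
  {ι : Type*} {l : Filter ι} {ν : ι → ProbabilityMeasure X}

/-- The principle of descent. -/
theorem lowerSemicontinuous_kernelPotential (hK : LowerSemicontinuous (Function.uncurry K)) :
    LowerSemicontinuous fun p : ProbabilityMeasure X × X => kernelPotential K p.1 p.2 := by
  have hprod : Continuous fun p : ProbabilityMeasure X × X => (diracProba p.2).prod p.1 :=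
    ProbabilityMeasure.continuous_prod.comp
      ((continuous_diracProba.comp continuous_snd).prodMk continuous_fst)
  have hpotential : ∀ p : ProbabilityMeasure X × X, kernelPotential K p.1 p.2 =
      ∫⁻ q, Function.uncurry K q ∂((diracProba p.2).prod p.1 : ProbabilityMeasure (X × X)) := by
    intro p
    rw [ProbabilityMeasure.toMeasure_prod, lintegral_prod _ hK.measurable.aemeasurable]
    simp only [diracProba, ProbabilityMeasure.coe_mk]
    rw [lintegral_dirac' _ hK.measurable.lintegral_prod_right']
    rfl
  simp_rw [hpotential]
  exact (lowerSemicontinuous_lintegral hK).comp hprod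

theorem lowerSemicontinuous_kernelPolarization (hK : LowerSemicontinuous (Function.uncurry K))
    (hA : IsCompact A) :
    LowerSemicontinuous fun ν : ProbabilityMeasure X => kernelPolarization K A ν :=
  lowerSemicontinuous_biInf_of_isCompact hA (lowerSemicontinuous_kernelPotential hK)

lemma eventually_lt_kernelPolarization (hK : LowerSemicontinuous (Function.uncurry K))
    (hA : IsCompact A) (hμW : ∀ x ∈ A, W ≤ kernelPotential K μ x) {c : ℝ≥0∞} (hc : c < W) :
    ∀ᶠ ν : ProbabilityMeasure X in 𝓝 μ, c < kernelPolarization K A ν :=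
  lowerSemicontinuous_kernelPolarization hK hA μ c (hc.trans_le (le_iInf₂ hμW))

theorem tendsto_kernelPolarization (hK : LowerSemicontinuous (Function.uncurry K))
    (hsymm : ∀ x y, K x y = K y x) (hA : IsCompact A) (hμ : (μ : Measure X) Aᶜ = 0)
    (hμW : ∀ x ∈ A, kernelPotential K μ x = W) (hν : ∀ i, (ν i : Measure X) Aᶜ = 0)
    (hlim : Tendsto ν l (𝓝 μ)) :
    Tendsto (fun i => kernelPolarization K A (ν i)) l (𝓝 W) :=
  tendsto_order.2
    ⟨fun _ hc => hlim.eventually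
        (eventually_lt_kernelPolarization hK hA (fun x hx => (hμW x hx).ge) hc),
      fun _ hc => Eventually.of_forall fun i =>
        (kernelPolarization_le_of_kernelPotential_eq hK.measurable hsymm hμ hμW (hν i)).trans_lt hc⟩

theorem kernelPotential_le_of_mapClusterPt (hK : LowerSemicontinuous (Function.uncurry K))
    (hsymm : ∀ x y, K x y = K y x) (hμ : (μ : Measure X) Aᶜ = 0)
    (hμW : ∀ x ∈ A, kernelPotential K μ x = W) (hν : ∀ i, (ν i : Measure X) Aᶜ = 0)
    (hlim : Tendsto (fun i => kernelPolarization K A (ν i)) l (𝓝 W))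
    {ν₀ : ProbabilityMeasure X} (hν₀ : MapClusterPt ν₀ l ν)
    {x : X} (hx : x ∈ (μ : Measure X).support) : kernelPotential K ν₀ x ≤ W := by
  by_contra! hlt
  obtain ⟨c, hWc, hc⟩ := exists_between hlt
  obtain ⟨V, hV, U, hU, hx_mem, hVU⟩ : ∃ V ∈ 𝓝 ν₀, ∃ U : Set X, IsOpen U ∧ x ∈ U ∧
      ∀ ν' ∈ V, ∀ y ∈ U, c < kernelPotential K ν' y := by
    obtain ⟨⟨V, U⟩, ⟨hV, hx_mem, hU⟩, hVU⟩ :=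
      ((𝓝 ν₀).basis_sets.prod_nhds (nhds_basis_opens x)).eventually_iff.1
        (lowerSemicontinuous_kernelPotential hK (ν₀, x) c hc)
    exact ⟨V, hV, U, hU, hx_mem, fun ν' hν' y hy => hVU (Set.mk_mem_prod hν' hy)⟩
  have hfreq : ∃ᶠ i in l,
      c * (μ : Measure X) U + kernelPolarization K A (ν i) * (μ : Measure X) Uᶜ ≤ W :=
    (hν₀.frequently hV).mono fun i hi =>
      (mul_add_kernelPolarization_mul_le_lintegral hμ hU.measurableSet
        fun y hy => (hVU (ν i) hi y hy).le).trans_eq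
        (lintegral_kernelPotential_eq hK.measurable hsymm hμW (hν i))
  have hle : c * (μ : Measure X) U + W * (μ : Measure X) Uᶜ ≤ W :=
    le_of_tendsto_of_frequently (tendsto_const_nhds.add
      (ENNReal.Tendsto.mul_const hlim (Or.inr (measure_ne_top _ _)))) hfreq
  have hlt_mul : W * (μ : Measure X) U < c * (μ : Measure X) U :=
    ENNReal.mul_lt_mul_left
      ((Measure.mem_support_iff_forall x).1 hx U (hU.mem_nhds hx_mem)).ne' (measure_ne_top _ _) hWc
  refine lt_irrefl W ?_
  calc W = W * (μ : Measure X) U + W * (μ : Measure X) Uᶜ := by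
        rw [← mul_add, prob_add_prob_compl hU.measurableSet, mul_one]
    _ < c * (μ : Measure X) U + W * (μ : Measure X) Uᶜ :=
        ENNReal.add_lt_add_right (ENNReal.mul_ne_top hlt.ne_top (measure_ne_top _ _)) hlt_mul
    _ ≤ W := hle

theorem tendsto_kernelPolarization_iff [T2Space X] (hK : LowerSemicontinuous (Function.uncurry K))
    (hsymm : ∀ x y, K x y = K y x) (hA : IsCompact A) (hμ : (μ : Measure X) Aᶜ = 0)
    (hsupp : A ⊆ (μ : Measure X).support) (hμW : ∀ x ∈ A, kernelPotential K μ x = W)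
    (hunique : ∀ ν : ProbabilityMeasure X, (ν : Measure X) Aᶜ = 0 → kernelEnergy K ν ≤ W → ν = μ)
    (hν : ∀ i, (ν i : Measure X) Aᶜ = 0) :
    Tendsto (fun i => kernelPolarization K A (ν i)) l (𝓝 W) ↔ Tendsto ν l (𝓝 μ) := by
  refine ⟨fun hlim => ?_, tendsto_kernelPolarization hK hsymm hA hμ hμW hν⟩
  refine (isCompact_setOf_measure_compl_eq_zero hA).tendsto_nhds_of_unique_mapClusterPt
    (Eventually.of_forall hν) fun ν₀ hν₀A hν₀ => hunique ν₀ hν₀A ?_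
  exact lintegral_le_const (mem_of_superset (mem_ae_iff.2 hν₀A) fun x hx =>
    kernelPotential_le_of_mapClusterPt hK hsymm hμ hμW hν hlim hν₀ (hsupp hx))

end Equilibrium

section EmpiricalMeasure

open ProbabilityTheory

variable {X : Type*} [MeasurableSpace X]

/-- The uniform probability measure on the points of a nonempty configuration, counted with
multiplicity; it bundles `countingMeasure`. -/
def empiricalMeasure {N : ℕ} [NeZero N] (ω : Fin N → X) : ProbabilityMeasure X :=
  ⟨(N : ℝ≥0∞)⁻¹ • ∑ i, Measure.dirac (ω i), ⟨by
    simp [ENNReal.inv_mul_cancel (NeZero.ne (N : ℝ≥0∞)) (ENNReal.natCast_ne_top N)]⟩⟩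

lemma empiricalMeasure_compl_eq_zero {A : Set X} (hA : MeasurableSet A) {N : ℕ} [NeZero N]
    {ω : Fin N → X} (hω : ∀ i, ω i ∈ A) : (empiricalMeasure ω : Measure X) Aᶜ = 0 := by
  simp [empiricalMeasure, hA.compl, hω]

lemma integral_empiricalMeasure {N : ℕ} [NeZero N] (ω : Fin N → X) {g : X → ℝ}
    (hg : StronglyMeasurable g) :
    ∫ x, g x ∂(empiricalMeasure ω : Measure X) = (∑ i, g (ω i)) / N := by
  have hdirac : ∀ i, Integrable g (Measure.dirac (ω i)) := fun i =>
    integrable_dirac' hg enorm_lt_top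
  simp [empiricalMeasure, integral_smul_measure, integral_finsetSum_measure fun i _ => hdirac i,
    integral_dirac' _ _ hg, div_eq_inv_mul]

lemma ae_tendsto_integral_empiricalMeasure (μ : Measure X) [IsProbabilityMeasure μ] {g : X → ℝ}
    (hg : StronglyMeasurable g) (hint : Integrable g μ) :
    ∀ᵐ x ∂Measure.infinitePi fun _ : ℕ => μ, Tendsto (fun N =>
      ∫ y, g y ∂(empiricalMeasure fun i : Fin (N + 1) => x i : Measure X)) atTop
        (𝓝 (∫ y, g y ∂μ)) := by
  have heval : ∀ i, MeasurePreserving (fun x : ℕ → X => x i) (Measure.infinitePi fun _ => μ) μ :=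
    measurePreserving_eval_infinitePi fun _ => μ
  have hindep : iIndepFun (fun (i : ℕ) (x : ℕ → X) => g (x i)) (Measure.infinitePi fun _ => μ) :=
    iIndepFun_infinitePi fun _ => hg.measurable
  filter_upwards [strong_law_ae_real (fun (i : ℕ) (x : ℕ → X) => g (x i))
    ((heval 0).integrable_comp_of_integrable hint)
    (fun i j hij => hindep.indepFun hij)
    (fun i => ((heval i).hasLaw.identDistrib (heval 0).hasLaw).comp hg.measurable)] with x hx
  simp_rw [integral_empiricalMeasure _ hg, Fin.sum_univ_eq_sum_range fun i => g (x i)]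
  rw [← (heval 0).hasLaw.integral_comp hint.aestronglyMeasurable]
  exact (tendsto_add_atTop_iff_nat 1).2 hx

variable [TopologicalSpace X] [OpensMeasurableSpace X]

theorem ae_eventually_empiricalMeasure_mem (μ : ProbabilityMeasure X)
    {V : Set (ProbabilityMeasure X)} (hV : V ∈ 𝓝 μ) :
    ∀ᵐ x ∂Measure.infinitePi fun _ : ℕ => (μ : Measure X),
      ∀ᶠ N in atTop, empiricalMeasure (fun i : Fin (N + 1) => x i) ∈ V := by
  -- `V` constrains finitely many test functions only, so the exceptional null set may depend on the
  -- test function; this is what convergence along the filter below expresses.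
  suffices h : Tendsto id ((ae (Measure.infinitePi fun _ : ℕ => (μ : Measure X))).bind
      fun x => atTop.map fun N => empiricalMeasure fun i : Fin (N + 1) => x i) (𝓝 μ) from h hV
  refine ProbabilityMeasure.tendsto_iff_forall_integral_tendsto.2 fun g U hU => ?_
  exact (ae_tendsto_integral_empiricalMeasure μ g.continuous.stronglyMeasurable
    (g.integrable _)).mono fun x hx => hx hU

lemma eventually_exists_empiricalMeasure_mem {A : Set X} {μ : ProbabilityMeasure X}
    (hμ : (μ : Measure X) Aᶜ = 0) {V : Set (ProbabilityMeasure X)} (hV : V ∈ 𝓝 μ) :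
    ∀ᶠ N in atTop, ∃ ω : Fin (N + 1) → X, (∀ i, ω i ∈ A) ∧ empiricalMeasure ω ∈ V := by
  have hmem : ∀ᵐ x ∂Measure.infinitePi fun _ : ℕ => (μ : Measure X), ∀ i, x i ∈ A :=
    ae_all_iff.2 fun i =>
      (measurePreserving_eval_infinitePi (fun _ => (μ : Measure X)) i).quasiMeasurePreserving.ae
        (mem_ae_iff.2 hμ)
  obtain ⟨x, hxA, hxV⟩ := (hmem.and (ae_eventually_empiricalMeasure_mem μ hV)).exists
  exact hxV.mono fun N hN => ⟨fun i => x i, fun i => hxA i, hN⟩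

end EmpiricalMeasure

section MaxPolarization

/-- The largest polarization of an `N`-point configuration in `A` for an arbitrary kernel. -/
def maxKernelPolarization {X : Type*} [MeasurableSpace X] (K : X → X → ℝ≥0∞) (A : Set X) (N : ℕ)
    [NeZero N] : ℝ≥0∞ :=
  ⨆ (ω : Fin N → X) (_ : ∀ i, ω i ∈ A), kernelPolarization K A (empiricalMeasure ω)

lemma ennreal_tendsto_div_nhds_one_iff {ι : Type*} {l : Filter ι} {a b : ι → ℝ≥0∞} {c : ℝ≥0∞}
    (hb : Tendsto b l (𝓝 c)) (hc_zero : c ≠ 0) (hc_top : c ≠ ⊤) :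
    Tendsto (fun i => a i / b i) l (𝓝 1) ↔ Tendsto a l (𝓝 c) := by
  constructor <;> intro h
  · have hmul := ENNReal.Tendsto.mul h (Or.inl one_ne_zero) hb (Or.inl hc_zero)
    rw [one_mul] at hmul
    refine hmul.congr' ?_
    filter_upwards [hb.eventually_ne hc_zero, hb.eventually_ne hc_top] with i h_zero h_top
    exact ENNReal.div_mul_cancel h_zero h_top
  · rw [← ENNReal.div_self hc_zero hc_top]
    exact ENNReal.Tendsto.div h (Or.inl hc_zero) hb (Or.inl hc_top)

variable {X : Type*} [TopologicalSpace X] [SecondCountableTopology X]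
  [TopologicalSpace.MetrizableSpace X] [MeasurableSpace X] [BorelSpace X]
  {K : X → X → ℝ≥0∞} {A : Set X} {W : ℝ≥0∞} {μ : ProbabilityMeasure X}

theorem tendsto_maxKernelPolarization (hK : LowerSemicontinuous (Function.uncurry K))
    (hsymm : ∀ x y, K x y = K y x) (hA : IsCompact A) (hμ : (μ : Measure X) Aᶜ = 0)
    (hμW : ∀ x ∈ A, kernelPotential K μ x = W) :
    Tendsto (fun N => maxKernelPolarization K A (N + 1)) atTop (𝓝 W) := by
  refine tendsto_order.2 ⟨fun c hc => ?_, fun c hc => Eventually.of_forall fun N => ?_⟩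
  · filter_upwards [eventually_exists_empiricalMeasure_mem hμ
      (eventually_lt_kernelPolarization hK hA (fun x hx => (hμW x hx).ge) hc)] with N hN
    obtain ⟨ω, hω, hlt⟩ := hN
    exact lt_of_lt_of_le hlt (le_iSup₂_of_le ω hω le_rfl)
  · exact (iSup₂_le fun ω hω =>
      kernelPolarization_le_of_kernelPotential_eq hK.measurable hsymm hμ hμW
        (empiricalMeasure_compl_eq_zero hA.measurableSet hω)).trans_lt hc

/-- Configurations are indexed by `N + 1`, so that their empirical measures are defined. -/
theorem asymptotically_optimal_iff_weak_convergence_general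
    (hK : LowerSemicontinuous (Function.uncurry K)) (hsymm : ∀ x y, K x y = K y x)
    (hA : IsCompact A) (hμ : (μ : Measure X) Aᶜ = 0) (hsupp : A ⊆ (μ : Measure X).support)
    (hW_zero : W ≠ 0) (hW_top : W ≠ ⊤) (hμW : ∀ x ∈ A, kernelPotential K μ x = W)
    (hunique : ∀ ν : ProbabilityMeasure X, (ν : Measure X) Aᶜ = 0 → kernelEnergy K ν ≤ W → ν = μ)
    {ω : (N : ℕ) → Fin (N + 1) → X} (hω : ∀ N i, ω N i ∈ A) :
    Tendsto (fun N => kernelPolarization K A (empiricalMeasure (ω N)) /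
        maxKernelPolarization K A (N + 1)) atTop (𝓝 1) ↔
      Tendsto (fun N => empiricalMeasure (ω N)) atTop (𝓝 μ) :=
  (ennreal_tendsto_div_nhds_one_iff (tendsto_maxKernelPolarization hK hsymm hA hμ hμW)
    hW_zero hW_top).trans
    (tendsto_kernelPolarization_iff hK hsymm hA hμ hsupp hμW hunique fun N =>
      empiricalMeasure_compl_eq_zero hA.measurableSet (hω N))

end MaxPolarization

section DistanceKernel

variable {t : ℕ} {f : ℝ≥0 → ℝ≥0∞} {A : Set (EuclideanSpace ℝ (Fin t))}

lemma lowerSemicontinuous_uncurry_nndist {X : Type*} [PseudoMetricSpace X] {f : ℝ≥0 → ℝ≥0∞}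
    (hf : LowerSemicontinuous f) :
    LowerSemicontinuous (Function.uncurry fun x y : X => f (nndist x y)) :=
  hf.comp continuous_nndist

lemma discretePotential_eq_kernelPotential {N : ℕ} [NeZero N]
    (ω : Fin N → EuclideanSpace ℝ (Fin t)) (x : EuclideanSpace ℝ (Fin t)) :
    discretePotential f ω x =
      kernelPotential (fun x y => f (nndist x y)) (empiricalMeasure ω) x := by
  simp [discretePotential, kernelPotential, empiricalMeasure, lintegral_smul_measure,
    lintegral_finsetSum_measure]

lemma polarization_eq_kernelPolarization {N : ℕ} [NeZero N]
    (ω : Fin N → EuclideanSpace ℝ (Fin t)) :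
    polarization f A ω =
      kernelPolarization (fun x y => f (nndist x y)) A (empiricalMeasure ω) := by
  simp_rw [polarization, kernelPolarization, discretePotential_eq_kernelPotential]

lemma maxPolarization_eq_maxKernelPolarization (N : ℕ) [NeZero N] :
    maxPolarization f A N = maxKernelPolarization (fun x y => f (nndist x y)) A N := by
  simp_rw [maxPolarization, maxKernelPolarization, polarization_eq_kernelPolarization]

lemma weaklyTendsto_countingMeasure_iff (ω : (N : ℕ) → Fin N → EuclideanSpace ℝ (Fin t))
    (μ : ProbabilityMeasure (EuclideanSpace ℝ (Fin t))) :
    WeaklyTendsto (fun N => countingMeasure (ω N)) μ ↔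
      Tendsto (fun N => empiricalMeasure (ω (N + 1))) atTop (𝓝 μ) := by
  rw [ProbabilityMeasure.tendsto_iff_forall_integral_tendsto]
  exact forall_congr' fun g => (tendsto_add_atTop_iff_nat 1).symm

end DistanceKernel

theorem asymptotically_optimal_iff_weak_convergence
    {t : ℕ} (A : Set (EuclideanSpace ℝ (Fin t))) (hA : IsCompact A)
    (f : ℝ≥0 → ℝ≥0∞) (hf : LowerSemicontinuous f)
    (μeq : Measure (EuclideanSpace ℝ (Fin t))) (hμeq : IsProbabilityMeasure μeq)
    (hμeqA : μeq Aᶜ = 0)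
    (hA1 : ∃ μ : Measure (EuclideanSpace ℝ (Fin t)),
      IsProbabilityMeasure μ ∧ μ Aᶜ = 0 ∧ energy f μ < ⊤)
    (hA2min : ∀ ν : Measure (EuclideanSpace ℝ (Fin t)),
      IsProbabilityMeasure ν → ν Aᶜ = 0 → energy f μeq ≤ energy f ν)
    (hA2uniq : ∀ ν : Measure (EuclideanSpace ℝ (Fin t)),
      IsProbabilityMeasure ν → ν Aᶜ = 0 → energy f ν = energy f μeq → ν = μeq)
    (hA3 : ∀ x ∈ A, ∀ U : Set (EuclideanSpace ℝ (Fin t)), IsOpen U → x ∈ U → 0 < μeq U)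
    (W : ℝ≥0∞) (hW : 0 < W) (hA4 : ∀ x ∈ A, potential f μeq x = W)
    (ω : (N : ℕ) → Fin N → EuclideanSpace ℝ (Fin t)) (hω : ∀ N, ∀ i, ω N i ∈ A) :
    Tendsto (fun N => polarization f A (ω N) / maxPolarization f A N) atTop (𝓝 1) ↔
      WeaklyTendsto (fun N => countingMeasure (ω N)) μeq := by
  have henergy : energy f μeq = W := lintegral_eq_const (mem_of_superset (mem_ae_iff.2 hμeqA) hA4)
  have hW_top : W ≠ ⊤ := by
    obtain ⟨μ, hμ, hμA, hfinite⟩ := hA1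
    exact ne_top_of_le_ne_top hfinite.ne (henergy ▸ hA2min μ hμ hμA)
  have hunique : ∀ ν : ProbabilityMeasure (EuclideanSpace ℝ (Fin t)),
      (ν : Measure (EuclideanSpace ℝ (Fin t))) Aᶜ = 0 → energy (t := t) f ν ≤ W →
        ν = ⟨μeq, hμeq⟩ :=
    fun ν hνA hν => Subtype.ext <| hA2uniq ν ν.2 hνA <|
      (hν.trans_eq henergy.symm).antisymm (hA2min ν ν.2 hνA)
  have hsupp : A ⊆ μeq.support := by
    rw [Measure.support_eq_forall_isOpen]
    exact fun x hx U hxU hU => hA3 x hx U hU hxU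
  rw [← tendsto_add_atTop_iff_nat 1]
  simp_rw [polarization_eq_kernelPolarization, maxPolarization_eq_maxKernelPolarization]
  exact (asymptotically_optimal_iff_weak_convergence_general (μ := ⟨μeq, hμeq⟩)
    (lowerSemicontinuous_uncurry_nndist hf) (fun x y => by rw [nndist_comm]) hA hμeqA hsupp hW.ne'
    hW_top hA4 hunique fun N => hω (N + 1)).trans (weaklyTendsto_countingMeasure_iff ω _).symm
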